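/- arXiv:2306.01895 — 3 statements merged into one kernel-verified Lean document; each statement's English description precedes it below -/
import Mathlib

section
/- Let S be a finite nonempty set of points in Euclidean space ℝ^d and let δ ≥ 0. If dist(x, y) ≤ δ for all x, y ∈ S (i.e., S has diameter at most δ), then there exists a point c ∈ ℝ^d such that dist(x, c) ≤ δ/√2 for every x ∈ S. -/
/-!
Let `R` be the infimum of the radii of the balls containing `S`. If `S` lies in the ball of radius
`r` about `c` and in the ball of radius `r'` about `c'`, then by Stewart's theorem it lies in a ball
about the point `(1 - t) c + t c'` whose squared radius is
`(1 - t) r² + t r'² - t (1 - t) d(c, c')²`, and this is therefore at least `R²`. For `t = 1/2` it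
follows that the centres of nearly minimal balls are close to each other, so that in a complete
space some ball of radius `R` contains `S`. Let `c` be its centre; with `r = R`, dividing by `t` and
letting `t → 0` gives `d(c, c')² + R² ≤ r'²`. When `S` has diameter at most `δ`, any point of `S`
can be taken as `c'`, with `r' = δ`; hence the ball of squared radius `δ² - R²` about `c` contains
`S`, so that `R² ≤ δ² - R²`.
-/

open Filter Metric Set Topology

section ChebyshevRadius

variable {P : Type*} [PseudoMetricSpace P] {S : Set P} {c : P} {r : ℝ}

/-- The Chebyshev radius of a set: the infimum of the radii of the closed balls containing it, with
centres anywhere in the space. It is meaningful for bounded nonempty sets only. -/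
noncomputable def chebyshevRadius (S : Set P) : ℝ :=
  sInf {r : ℝ | ∃ c, S ⊆ closedBall c r}

theorem nonneg_of_subset_closedBall (hS : S.Nonempty) (h : S ⊆ closedBall c r) : 0 ≤ r :=
  nonempty_closedBall.1 (hS.mono h)

theorem chebyshevRadius_nonneg (hS : S.Nonempty) : 0 ≤ chebyshevRadius S :=
  Real.sInf_nonneg fun _ ⟨_, hc⟩ ↦ nonneg_of_subset_closedBall hS hc

theorem chebyshevRadius_le (hS : S.Nonempty) (h : S ⊆ closedBall c r) : chebyshevRadius S ≤ r :=
  csInf_le ⟨0, fun _ ⟨_, hc⟩ ↦ nonneg_of_subset_closedBall hS hc⟩ ⟨c, h⟩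

theorem chebyshevRadius_sq_le (hS : S.Nonempty) (h : ∀ x ∈ S, dist x c ^ 2 ≤ r) :
    chebyshevRadius S ^ 2 ≤ r := by
  obtain ⟨x, hx⟩ := hS
  have hr : 0 ≤ r := (sq_nonneg _).trans (h x hx)
  exact (Real.le_sqrt (chebyshevRadius_nonneg ⟨x, hx⟩) hr).1 <|
    chebyshevRadius_le ⟨x, hx⟩ fun y hy ↦ Real.le_sqrt_of_sq_le (h y hy)

theorem exists_subset_closedBall_of_chebyshevRadius_lt (hS : S.Nonempty)
    (hb : Bornology.IsBounded S) (h : chebyshevRadius S < r) : ∃ c, S ⊆ closedBall c r := by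
  obtain ⟨r₀, hr₀⟩ := hb.subset_closedBall hS.some
  have hradii : {r : ℝ | ∃ c, S ⊆ closedBall c r}.Nonempty := ⟨r₀, hS.some, hr₀⟩
  obtain ⟨r', ⟨c, hc⟩, hr'⟩ := exists_lt_of_csInf_lt hradii h
  exact ⟨c, hc.trans (closedBall_subset_closedBall hr'.le)⟩

end ChebyshevRadius

section InnerProductSpace

variable {V P : Type*} [SeminormedAddCommGroup V] [InnerProductSpace ℝ V]
  [PseudoMetricSpace P] [NormedAddTorsor V P] {S : Set P} {c c' : P} {r r' : ℝ}

theorem dist_sq_lineMap (x c c' : P) (t : ℝ) :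
    dist x (AffineMap.lineMap c c' t) ^ 2 =
      (1 - t) * dist x c ^ 2 + t * dist x c' ^ 2 - t * (1 - t) * dist c c' ^ 2 := by
  have hx : x -ᵥ AffineMap.lineMap c c' t = (x -ᵥ c) - t • (c' -ᵥ c) := by
    rw [AffineMap.lineMap_apply, vsub_vadd_eq_vsub_sub]
  have hc' : x -ᵥ c' = (x -ᵥ c) - (c' -ᵥ c) := (vsub_sub_vsub_cancel_right x c' c).symm
  rw [dist_comm c c']
  simp only [dist_eq_norm_vsub V, hx, hc', norm_sub_sq_real, real_inner_smul_right, norm_smul,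
    mul_pow, Real.norm_eq_abs, sq_abs]
  ring

include V

theorem chebyshevRadius_sq_le_of_subset_closedBall (hS : S.Nonempty) (h : S ⊆ closedBall c r)
    (h' : S ⊆ closedBall c' r') {t : ℝ} (ht : t ∈ Icc (0 : ℝ) 1) :
    chebyshevRadius S ^ 2 ≤ (1 - t) * r ^ 2 + t * r' ^ 2 - t * (1 - t) * dist c c' ^ 2 := by
  refine chebyshevRadius_sq_le (c := AffineMap.lineMap c c' t) hS fun x hx ↦ ?_
  have hxc : dist x c ≤ r := h hx
  have hxc' : dist x c' ≤ r' := h' hx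
  have h1t : 0 ≤ 1 - t := sub_nonneg.2 ht.2
  have h0t : 0 ≤ t := ht.1
  rw [dist_sq_lineMap]
  gcongr

theorem dist_le_of_subset_closedBall (hS : S.Nonempty) (h : S ⊆ closedBall c r)
    (h' : S ⊆ closedBall c' r) : dist c c' ≤ 2 * √(r ^ 2 - chebyshevRadius S ^ 2) := by
  have hmid := chebyshevRadius_sq_le_of_subset_closedBall hS h h' (t := 1 / 2) (by norm_num)
  have hhalf : dist c c' / 2 ≤ √(r ^ 2 - chebyshevRadius S ^ 2) :=
    Real.le_sqrt_of_sq_le (by linarith)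
  linarith

theorem exists_subset_closedBall_chebyshevRadius [CompleteSpace P] (hS : S.Nonempty)
    (hb : Bornology.IsBounded S) : ∃ c, S ⊆ closedBall c (chebyshevRadius S) := by
  obtain ⟨u, hu_anti, hu_gt, hu_lim⟩ := exists_seq_strictAnti_tendsto (chebyshevRadius S)
  choose c hc using fun n ↦
    exists_subset_closedBall_of_chebyshevRadius_lt hS hb (hu_gt n)
  have hbound_lim : Tendsto (fun n ↦ 2 * √(u n ^ 2 - chebyshevRadius S ^ 2)) atTop (𝓝 0) := by
    have hcont : Continuous fun r : ℝ ↦ 2 * √(r ^ 2 - chebyshevRadius S ^ 2) := by fun_prop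
    exact (hcont.tendsto' _ _ (by simp)).comp hu_lim
  have hcauchy : CauchySeq c := cauchySeq_of_le_tendsto_0' _ (fun n m hnm ↦
    dist_le_of_subset_closedBall hS (hc n)
      ((hc m).trans (closedBall_subset_closedBall (hu_anti.antitone hnm)))) hbound_lim
  obtain ⟨c₀, hc₀⟩ := cauchySeq_tendsto_of_complete hcauchy
  exact ⟨c₀, fun x hx ↦
    le_of_tendsto_of_tendsto' (tendsto_const_nhds.dist hc₀) hu_lim fun n ↦ hc n hx⟩

theorem dist_sq_add_chebyshevRadius_sq_le (hS : S.Nonempty)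
    (hc : S ⊆ closedBall c (chebyshevRadius S)) (h' : S ⊆ closedBall c' r') :
    dist c c' ^ 2 + chebyshevRadius S ^ 2 ≤ r' ^ 2 := by
  have hsegment : ∀ t ∈ Ioc (0 : ℝ) 1,
      (1 - t) * dist c c' ^ 2 + chebyshevRadius S ^ 2 ≤ r' ^ 2 := by
    intro t ht
    have hle := chebyshevRadius_sq_le_of_subset_closedBall hS hc h' (Ioc_subset_Icc_self ht)
    refine le_of_mul_le_mul_left ?_ ht.1
    linarith
  have hlim : Tendsto (fun t : ℝ ↦ (1 - t) * dist c c' ^ 2 + chebyshevRadius S ^ 2) (𝓝[>] 0)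
      (𝓝 (dist c c' ^ 2 + chebyshevRadius S ^ 2)) :=
    tendsto_nhdsWithin_of_tendsto_nhds (Continuous.tendsto' (by fun_prop) _ _ (by simp))
  exact le_of_tendsto hlim (mem_of_superset (Ioc_mem_nhdsGT one_pos) hsegment)

theorem two_mul_chebyshevRadius_sq_le [CompleteSpace P] (hS : S.Nonempty) {δ : ℝ}
    (hdiam : ∀ x ∈ S, ∀ y ∈ S, dist x y ≤ δ) : 2 * chebyshevRadius S ^ 2 ≤ δ ^ 2 := by
  obtain ⟨c, hc⟩ := exists_subset_closedBall_chebyshevRadius hS (isBounded_iff.2 ⟨δ, hdiam⟩)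
  have hsmaller : ∀ y ∈ S, dist y c ^ 2 ≤ δ ^ 2 - chebyshevRadius S ^ 2 := by
    intro y hy
    rw [dist_comm, le_sub_iff_add_le]
    exact dist_sq_add_chebyshevRadius_sq_le hS hc fun x hx ↦ hdiam x hx y hy
  linarith [chebyshevRadius_sq_le hS hsmaller]

theorem enclosing_ball_of_diameter_general [CompleteSpace P] (S : Set P) (δ : ℝ)
    (hdiam : ∀ x ∈ S, ∀ y ∈ S, dist x y ≤ δ) : ∃ c, ∀ x ∈ S, dist x c ≤ δ / √2 := by
  obtain rfl | hS := S.eq_empty_or_nonempty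
  · obtain ⟨c⟩ : Nonempty P := AddTorsor.nonempty
    exact ⟨c, by simp⟩
  obtain ⟨c, hc⟩ := exists_subset_closedBall_chebyshevRadius hS (isBounded_iff.2 ⟨δ, hdiam⟩)
  have hδ : 0 ≤ δ := dist_nonneg.trans (hdiam _ hS.some_mem _ hS.some_mem)
  have hradius : chebyshevRadius S ≤ δ / √2 := by
    refine le_of_sq_le_sq ?_ (by positivity)
    rw [div_pow, Real.sq_sqrt zero_le_two]
    linarith [two_mul_chebyshevRadius_sq_le hS hdiam]
  exact ⟨c, fun x hx ↦ (hc hx).trans hradius⟩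

end InnerProductSpace

/-- Jung-type enclosing ball estimate: a finite nonempty set of points in `ℝ^d` of
diameter at most `δ` is contained in a closed ball of radius `δ/√2`. -/
theorem enclosing_ball_of_diameter {d : ℕ}
    (S : Finset (EuclideanSpace ℝ (Fin d))) (hS : S.Nonempty)
    (δ : ℝ) (hδ : 0 ≤ δ)
    (hdiam : ∀ x ∈ S, ∀ y ∈ S, dist x y ≤ δ) :
    ∃ c : EuclideanSpace ℝ (Fin d), ∀ x ∈ S, dist x c ≤ δ / Real.sqrt 2 :=
  enclosing_ball_of_diameter_general (S : Set (EuclideanSpace ℝ (Fin d))) δ hdiam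
end

section
/- Let X be a set of points in Euclidean space ℝ^d and let δ ≥ 0. For r ≥ 0, define the Rips complex R_r(X) as the collection of finite nonempty subsets σ ⊆ X such that dist(x, y) ≤ r for all x, y ∈ σ, and define the Čech complex C_r(X) as the collection of finite nonempty subsets σ ⊆ X such that there exists c ∈ ℝ^d with dist(x, c) ≤ r for all x ∈ σ. Then R_δ(X) ⊆ C_{δ/√2}(X) ⊆ R_{δ√2}(X). -/
/-- The Vietoris–Rips complex of `X ⊆ ℝ^d` at scale `r`: the finite nonempty subsets
of `X` of diameter at most `r`. -/
def ripsComplex {d : ℕ} (X : Set (EuclideanSpace ℝ (Fin d))) (r : ℝ) :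
    Set (Finset (EuclideanSpace ℝ (Fin d))) :=
  {σ | σ.Nonempty ∧ ↑σ ⊆ X ∧ ∀ x ∈ σ, ∀ y ∈ σ, dist x y ≤ r}

/-- The Čech complex of `X ⊆ ℝ^d` at scale `r`: the finite nonempty subsets of `X`
contained in some closed ball of radius `r`. -/
def cechComplex {d : ℕ} (X : Set (EuclideanSpace ℝ (Fin d))) (r : ℝ) :
    Set (Finset (EuclideanSpace ℝ (Fin d))) :=
  {σ | σ.Nonempty ∧ ↑σ ⊆ X ∧
    ∃ c : EuclideanSpace ℝ (Fin d), ∀ x ∈ σ, dist x c ≤ r}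

/-!
The first inclusion is the dimension-free form of Jung's theorem, the second is the triangle
inequality. The centre of the ball is a weighted mean. Among all weights in the standard simplex,
choose those that maximize the variance `V` of the points, and let `c` be the corresponding mean.
Moving the weights towards the vertex of a point `p` cannot increase `V`, and to first order this
says `‖p - c‖² ≤ V`. The parallel axis theorem gives `V + ‖p - c‖² ≤ δ²`, as the left-hand side is
the mean square distance to `p`. Together, `2‖p - c‖² ≤ δ²`.
-/

section WeightedVariance

variable {ι E : Type*} [Fintype ι] [SeminormedAddCommGroup E] [InnerProductSpace ℝ E]

/-- The variance of the family of points `x` under the weights `w`: the weighted mean of the squared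
distances to the weighted mean. The weights are not normalized; they are meant to sum to `1`. -/
noncomputable def weightedVariance (w : ι → ℝ) (x : ι → E) : ℝ :=
  ∑ i, w i * ‖x i - ∑ j, w j • x j‖ ^ 2

lemma continuous_weightedVariance (x : ι → E) : Continuous fun w => weightedVariance w x := by
  unfold weightedVariance
  fun_prop

/-- The **parallel axis theorem**. -/
lemma weightedVariance_add_norm_sub_sq {w : ι → ℝ} (hw : ∑ i, w i = 1) (x : ι → E) (y : E) :
    weightedVariance w x + ‖y - ∑ i, w i • x i‖ ^ 2 = ∑ i, w i * ‖x i - y‖ ^ 2 := by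
  rw [weightedVariance]
  set c := ∑ i, w i • x i with hc
  have hcentred : ∑ i, w i • (x i - c) = 0 := by
    simp only [smul_sub, Finset.sum_sub_distrib, ← Finset.sum_smul, hw, one_smul, ← hc, sub_self]
  have hcross : ∑ i, w i * inner ℝ (x i - c) (y - c) = 0 := by
    simp only [← real_inner_smul_left, ← sum_inner, hcentred, inner_zero_left]
  symm
  calc ∑ i, w i * ‖x i - y‖ ^ 2
      = ∑ i, (w i * ‖x i - c‖ ^ 2 - 2 * (w i * inner ℝ (x i - c) (y - c))
          + w i * ‖y - c‖ ^ 2) := by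
        refine Finset.sum_congr rfl fun i _ => ?_
        rw [← sub_sub_sub_cancel_right (x i) y c, norm_sub_sq_real]
        ring
    _ = ∑ i, w i * ‖x i - c‖ ^ 2 + ‖y - c‖ ^ 2 := by
        rw [Finset.sum_add_distrib, Finset.sum_sub_distrib, ← Finset.mul_sum, hcross,
          ← Finset.sum_mul, hw, mul_zero, sub_zero, one_mul]

lemma weightedVariance_segment_single [DecidableEq ι] {w : ι → ℝ} (hw : ∑ i, w i = 1) (x : ι → E)
    (k : ι) (t : ℝ) :
    weightedVariance ((1 - t) • w + t • Pi.single k 1) x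
      = (1 - t) * (weightedVariance w x + t * ‖x k - ∑ i, w i • x i‖ ^ 2) := by
  set c := ∑ i, w i • x i with hc
  set u : ι → ℝ := (1 - t) • w + t • Pi.single k 1 with hu
  have hu_sum : ∑ i, u i = 1 := by
    simp [hu, Finset.sum_add_distrib, ← Finset.mul_sum, hw]
  have hu_mean : ∑ i, u i • x i = (1 - t) • c + t • x k := by
    simp [hu, hc, add_smul, Finset.sum_add_distrib, Finset.smul_sum, mul_smul, Pi.single_apply]
  have hu_sq : ∑ i, u i * ‖x i - c‖ ^ 2 = (1 - t) * weightedVariance w x + t * ‖x k - c‖ ^ 2 := by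
    simp [hu, hc, weightedVariance, add_mul, Finset.sum_add_distrib, Finset.mul_sum, mul_assoc,
      Pi.single_apply]
  have hshift : ‖c - ((1 - t) • c + t • x k)‖ ^ 2 = t ^ 2 * ‖x k - c‖ ^ 2 := by
    rw [show c - ((1 - t) • c + t • x k) = t • (c - x k) by module, norm_smul, mul_pow,
      Real.norm_eq_abs, sq_abs, norm_sub_rev]
  have haxis := weightedVariance_add_norm_sub_sq hu_sum x c
  rw [hu_mean, hu_sq, hshift] at haxis
  linear_combination haxis

lemma norm_sub_sq_le_weightedVariance_of_isMaxOn {w : ι → ℝ} {x : ι → E} (hw : w ∈ stdSimplex ℝ ι)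
    (hmax : IsMaxOn (fun w => weightedVariance w x) (stdSimplex ℝ ι) w) (k : ι) :
    ‖x k - ∑ i, w i • x i‖ ^ 2 ≤ weightedVariance w x := by
  classical
  set D := ‖x k - ∑ i, w i • x i‖ ^ 2
  have hstep : ∀ t ∈ Set.Ioo (0 : ℝ) 1, (1 - t) * D ≤ weightedVariance w x := by
    rintro t ⟨ht0, ht1⟩
    have hmem : (1 - t) • w + t • Pi.single k 1 ∈ stdSimplex ℝ ι :=
      convex_stdSimplex ℝ ι hw (single_mem_stdSimplex ℝ k) (sub_nonneg.2 ht1.le) ht0.le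
        (sub_add_cancel 1 t)
    have hle : (1 - t) * (weightedVariance w x + t * D) ≤ weightedVariance w x :=
      weightedVariance_segment_single hw.2 x k t ▸ hmax hmem
    exact le_of_mul_le_mul_left (by linarith) ht0
  have hlim : Filter.Tendsto (fun t : ℝ => (1 - t) * D) (nhdsWithin 0 (Set.Ioi 0)) (nhds D) :=
    Continuous.tendsto' (by fun_prop) 0 D (by ring) |>.mono_left nhdsWithin_le_nhds
  exact le_of_tendsto hlim (Filter.eventually_of_mem (Ioo_mem_nhdsGT one_pos) hstep)

end WeightedVariance

/-- The dimension-free form of **Jung's theorem**, for finite families. -/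
lemma exists_forall_dist_le_div_sqrt_two {ι E : Type*} [Finite ι] [SeminormedAddCommGroup E]
    [InnerProductSpace ℝ E] {x : ι → E} {δ : ℝ} (hx : ∀ i j, dist (x i) (x j) ≤ δ) :
    ∃ c, ∀ i, dist (x i) c ≤ δ / √2 := by
  classical
  cases nonempty_fintype ι
  rcases isEmpty_or_nonempty ι with _ | ⟨⟨k₀⟩⟩
  · exact ⟨0, isEmptyElim⟩
  have hδ : 0 ≤ δ := dist_nonneg.trans (hx k₀ k₀)
  obtain ⟨w, hw, hmax⟩ := (isCompact_stdSimplex ℝ ι).exists_isMaxOn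
    ⟨_, single_mem_stdSimplex ℝ k₀⟩ (continuous_weightedVariance x).continuousOn
  refine ⟨∑ i, w i • x i, fun k => ?_⟩
  have hstationary := norm_sub_sq_le_weightedVariance_of_isMaxOn hw hmax k
  have haxis := weightedVariance_add_norm_sub_sq hw.2 x (x k)
  have hmean : ∑ i, w i * ‖x i - x k‖ ^ 2 ≤ δ ^ 2 :=
    calc ∑ i, w i * ‖x i - x k‖ ^ 2
        ≤ ∑ i, w i * δ ^ 2 := by
          gcongr with i
          · exact hw.1 i
          · exact (dist_eq_norm (x i) (x k)).symm.trans_le (hx i k)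
      _ = δ ^ 2 := by rw [← Finset.sum_mul, hw.2, one_mul]
  rw [dist_eq_norm]
  refine le_of_sq_le_sq ?_ (by positivity)
  rw [div_pow, Real.sq_sqrt zero_le_two]
  linarith

lemma dist_le_mul_sqrt_two {α : Type*} [PseudoMetricSpace α] {x y c : α} {δ : ℝ}
    (hx : dist x c ≤ δ / √2) (hy : dist y c ≤ δ / √2) : dist x y ≤ δ * √2 :=
  calc dist x y
      ≤ dist x c + dist y c := dist_triangle_right x y c
    _ ≤ δ / √2 + δ / √2 := add_le_add hx hy
    _ = δ * √2 := by rw [← two_mul, mul_div_left_comm, Real.div_sqrt]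

/-- The interleaving is proved simplex by simplex: the centre of the ball need not lie in `X`. -/
theorem rips_cech_interleaving_general {E : Type*} [SeminormedAddCommGroup E]
    [InnerProductSpace ℝ E] (σ : Finset E) (δ : ℝ) :
    ((∀ x ∈ σ, ∀ y ∈ σ, dist x y ≤ δ) → ∃ c, ∀ x ∈ σ, dist x c ≤ δ / √2) ∧
    ((∃ c, ∀ x ∈ σ, dist x c ≤ δ / √2) → ∀ x ∈ σ, ∀ y ∈ σ, dist x y ≤ δ * √2) := by
  refine ⟨fun hdiam => ?_, fun ⟨c, hc⟩ x hx y hy => dist_le_mul_sqrt_two (hc x hx) (hc y hy)⟩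
  obtain ⟨c, hc⟩ := exists_forall_dist_le_div_sqrt_two (x := ((↑) : σ → E))
    fun x y => hdiam x x.2 y y.2
  exact ⟨c, fun x hx => hc ⟨x, hx⟩⟩

/-- The Rips–Čech interleaving of de Silva and Ghrist:
`R_δ(X) ⊆ C_{δ/√2}(X) ⊆ R_{δ√2}(X)`. -/
theorem rips_cech_interleaving {d : ℕ}
    (X : Set (EuclideanSpace ℝ (Fin d))) (δ : ℝ) (hδ : 0 ≤ δ) :
    ripsComplex X δ ⊆ cechComplex X (δ / Real.sqrt 2) ∧
    cechComplex X (δ / Real.sqrt 2) ⊆ ripsComplex X (δ * Real.sqrt 2) :=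
  ⟨fun σ ⟨hne, hX, hdiam⟩ => ⟨hne, hX, (rips_cech_interleaving_general σ δ).1 hdiam⟩,
    fun σ ⟨hne, hX, hball⟩ => ⟨hne, hX, (rips_cech_interleaving_general σ δ).2 hball⟩⟩
end

section
/- Fix integers N ≥ 2 and s ≥ 1, and fix real numbers p_{kl} for 1 ≤ k, l ≤ N with k ≠ l, satisfying p_{kl} > 0, p_{kl} = p_{lk}, and Σ_{k≠l} p_{kl} = 1. For u = (u₁, …, u_N) ∈ (ℝ^s)^N, define d_{kl}(u) = ‖u_k − u_l‖², Z(u) = Σ_{k≠l} (1 + d_{kl}(u))⁻¹, q_{kl}(u) = (1 + d_{kl}(u))⁻¹ / Z(u), and the Kullback–Leibler objective L(u) = Σ_{k≠l} p_{kl} log(p_{kl} / q_{kl}(u)). Then L is differentiable, and for each index k its partial gradient with respect to the block u_k is ∂L/∂u_k = 4 Σ_{l≠k} (p_{kl} − q_{kl}(u)) (1 + d_{kl}(u))⁻¹ (u_k − u_l). -/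
/-!
A pairwise potential `∑_{a≠b} φ_{ab}(‖u_a - u_b‖²)` has differential
`h ↦ 2 ∑_{a≠b} φ'_{ab} ⟪u_a - u_b, h_a - h_b⟫`, and exchanging `a` and `b` shows that its gradient
in the block `u_k` is `2 ∑_{l≠k} (φ'_{kl} + φ'_{lk}) (u_k - u_l)`. Up to a constant, the t-SNE
objective is the pairwise potential `∑ p_{ab} log (1 + d_{ab})` plus `(∑ p_{ab}) log Z`, where `Z`
is again a pairwise potential. As `Z⁻¹ (1 + d_{ab})⁻² = q_{ab} (1 + d_{ab})⁻¹`, the two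
differentials combine into that of a pairwise potential with
`φ'_{ab} = (p_{ab} - (∑ p) q_{ab}) (1 + d_{ab})⁻¹`.
-/

open Finset

/-- Squared Euclidean distance `d_{kl}(u) = ‖u_k − u_l‖²` between the low-dimensional
points `u_k` and `u_l`. -/
noncomputable def tsneD {N s : ℕ} (u : Fin N → EuclideanSpace ℝ (Fin s))
    (k l : Fin N) : ℝ :=
  ‖u k - u l‖ ^ 2

/-- Normalizing constant `Z(u) = Σ_{k≠l} (1 + d_{kl}(u))⁻¹`. -/
noncomputable def tsneZ {N s : ℕ} (u : Fin N → EuclideanSpace ℝ (Fin s)) : ℝ :=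
  ∑ k, ∑ l ∈ univ.erase k, (1 + tsneD u k l)⁻¹

/-- Student-t low-dimensional affinities `q_{kl}(u) = (1 + d_{kl}(u))⁻¹ / Z(u)`. -/
noncomputable def tsneQ {N s : ℕ} (u : Fin N → EuclideanSpace ℝ (Fin s))
    (k l : Fin N) : ℝ :=
  (1 + tsneD u k l)⁻¹ / tsneZ u

/-- The t-SNE objective: the Kullback–Leibler divergence
`L(u) = Σ_{k≠l} p_{kl} log(p_{kl} / q_{kl}(u))`. -/
noncomputable def tsneL {N s : ℕ} (p : Fin N → Fin N → ℝ)
    (u : Fin N → EuclideanSpace ℝ (Fin s)) : ℝ :=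
  ∑ k, ∑ l ∈ univ.erase k, p k l * Real.log (p k l / tsneQ u k l)

lemma hasFDerivAt_comp_update {𝕜 ι F : Type*} {E : ι → Type*} [NontriviallyNormedField 𝕜]
    [Finite ι] [DecidableEq ι] [∀ i, NormedAddCommGroup (E i)] [∀ i, NormedSpace 𝕜 (E i)]
    [NormedAddCommGroup F] [NormedSpace 𝕜 F] {f : (∀ i, E i) → F} {f' : (∀ i, E i) →L[𝕜] F}
    {u : ∀ i, E i} (hf : HasFDerivAt f f' u) (k : ι) :
    HasFDerivAt (fun z => f (Function.update u k z))
      (f'.comp (ContinuousLinearMap.single 𝕜 E k)) (u k) := by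
  have := Fintype.ofFinite ι
  have hu : HasFDerivAt f f' (Function.update u k (u k)) := by
    rwa [Function.update_eq_self]
  have hsingle : ContinuousLinearMap.pi (Pi.single k (.id 𝕜 (E k)))
      = ContinuousLinearMap.single 𝕜 E k := by
    ext z : 1
    exact funext fun j => by rcases eq_or_ne j k with rfl | hj <;> simp [*]
  rw [← hsingle]
  exact hu.comp (u k) (hasFDerivAt_update u (u k))

/-- The differential at `u` of the squared distance `v ↦ ‖v_a - v_b‖²`. -/
noncomputable def sqDistDifferential {ι E : Type*} [NormedAddCommGroup E] [InnerProductSpace ℝ E]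
    (u : ι → E) (a b : ι) : (ι → E) →L[ℝ] ℝ :=
  (2 : ℝ) • (innerSL ℝ (u a - u b)).comp
    (ContinuousLinearMap.proj (R := ℝ) (φ := fun _ => E) a - ContinuousLinearMap.proj b)

lemma sqDistDifferential_apply {ι E : Type*} [NormedAddCommGroup E] [InnerProductSpace ℝ E]
    (u h : ι → E) (a b : ι) :
    sqDistDifferential u a b h = 2 * inner ℝ (u a - u b) (h a - h b) :=
  rfl

lemma hasFDerivAt_norm_sub_sq {ι E : Type*} [Finite ι] [NormedAddCommGroup E]
    [InnerProductSpace ℝ E] (u : ι → E) (a b : ι) :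
    HasFDerivAt (fun v : ι → E => ‖v a - v b‖ ^ 2) (sqDistDifferential u a b) u := by
  have := Fintype.ofFinite ι
  have hsub := (ContinuousLinearMap.proj (R := ℝ) (φ := fun _ => E) a
    - ContinuousLinearMap.proj b).hasFDerivAt (x := u)
  simpa [sqDistDifferential, ← ofNat_smul_eq_nsmul ℝ] using hsub.norm_sq

section PairwisePotential

variable {ι E : Type*} [Fintype ι] [DecidableEq ι]

lemma sum_sum_erase_comm {M : Type*} [AddCommMonoid M] (f : ι → ι → M) :
    ∑ a, ∑ b ∈ univ.erase a, f a b = ∑ a, ∑ b ∈ univ.erase a, f b a :=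
  Finset.sum_comm' fun a b => by simp [ne_comm]

variable [NormedAddCommGroup E] [InnerProductSpace ℝ E]

/-- The differential at `u` of a pairwise potential `v ↦ ∑_{a≠b} φ_{ab}(‖v_a - v_b‖²)`, in terms of
the derivatives `c_{ab} = φ'_{ab}(‖u_a - u_b‖²)`. -/
noncomputable def pairDifferential (c : ι → ι → ℝ) (u : ι → E) : (ι → E) →L[ℝ] ℝ :=
  ∑ a, ∑ b ∈ univ.erase a, c a b • sqDistDifferential u a b

lemma pairDifferential_apply (c : ι → ι → ℝ) (u h : ι → E) :
    pairDifferential c u h =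
      ∑ a, ∑ b ∈ univ.erase a, c a b * (2 * inner ℝ (u a - u b) (h a - h b)) := by
  simp only [pairDifferential, _root_.sum_apply, smul_apply, smul_eq_mul,
    sqDistDifferential_apply]

lemma pairDifferential_add_smul (r : ℝ) (c c' : ι → ι → ℝ) (u : ι → E) :
    pairDifferential (c + r • c') u = pairDifferential c u + r • pairDifferential c' u := by
  simp only [pairDifferential, Finset.smul_sum, ← Finset.sum_add_distrib, Pi.add_apply,
    Pi.smul_apply, add_smul, smul_assoc]

lemma hasFDerivAt_sum_comp_norm_sub_sq {φ : ι → ι → ℝ → ℝ} {φ' : ι → ι → ℝ} {u : ι → E}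
    (hφ : ∀ a b, a ≠ b → HasDerivAt (φ a b) (φ' a b) (‖u a - u b‖ ^ 2)) :
    HasFDerivAt (fun v => ∑ a, ∑ b ∈ univ.erase a, φ a b (‖v a - v b‖ ^ 2))
      (pairDifferential φ' u) u :=
  HasFDerivAt.fun_sum fun a _ => HasFDerivAt.fun_sum fun b hb =>
    (hφ a b (ne_of_mem_erase hb).symm).comp_hasFDerivAt u (hasFDerivAt_norm_sub_sq u a b)

lemma pairDifferential_apply_eq_sum_inner (c : ι → ι → ℝ) (u h : ι → E) :
    pairDifferential c u h =
      ∑ a, inner ℝ ((2 : ℝ) • ∑ b ∈ univ.erase a, (c a b + c b a) • (u a - u b)) (h a) := by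
  have hsplit : pairDifferential c u h =
      ∑ a, ∑ b ∈ univ.erase a, c a b * (2 * inner ℝ (u a - u b) (h a))
        + ∑ a, ∑ b ∈ univ.erase a, c a b * (2 * inner ℝ (u b - u a) (h b)) := by
    simp only [pairDifferential_apply, ← Finset.sum_add_distrib]
    refine Finset.sum_congr rfl fun a _ => Finset.sum_congr rfl fun b _ => ?_
    rw [inner_sub_right, ← neg_sub (u a) (u b), inner_neg_left]
    ring
  rw [hsplit, sum_sum_erase_comm fun a b => c a b * (2 * inner ℝ (u b - u a) (h b))]
  simp only [← Finset.sum_add_distrib, real_inner_smul_left, sum_inner, Finset.mul_sum]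
  refine Finset.sum_congr rfl fun a _ => Finset.sum_congr rfl fun b _ => ?_
  ring

lemma hasGradientAt_comp_update_of_pairDifferential [CompleteSpace E] {f : (ι → E) → ℝ}
    {c : ι → ι → ℝ} {u : ι → E} (hf : HasFDerivAt f (pairDifferential c u) u) (k : ι) :
    HasGradientAt (fun z => f (Function.update u k z))
      ((2 : ℝ) • ∑ l ∈ univ.erase k, (c k l + c l k) • (u k - u l)) (u k) := by
  rw [hasGradientAt_iff_hasFDerivAt]
  refine (hasFDerivAt_comp_update hf k).congr_fderiv (ContinuousLinearMap.ext fun z => ?_)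
  rw [ContinuousLinearMap.comp_apply, pairDifferential_apply_eq_sum_inner,
    InnerProductSpace.toDual_apply_apply, Finset.sum_eq_single k]
  · simp
  · intro a _ ha
    simp [Pi.single_eq_of_ne ha]
  · simp

end PairwisePotential

section StudentAffinities

variable {ι E : Type*} [SeminormedAddCommGroup E]

/-- The unnormalized Student-t weight `(1 + ‖u_k - u_l‖²)⁻¹` of the pair `(k, l)`. -/
noncomputable def studentWeight (u : ι → E) (k l : ι) : ℝ :=
  (1 + ‖u k - u l‖ ^ 2)⁻¹

lemma studentWeight_pos (u : ι → E) (k l : ι) : 0 < studentWeight u k l := by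
  unfold studentWeight
  positivity

lemma studentWeight_comm (u : ι → E) (k l : ι) : studentWeight u k l = studentWeight u l k := by
  simp only [studentWeight, norm_sub_rev]

variable [Fintype ι] [DecidableEq ι]

/-- The total Student-t weight of all ordered pairs of distinct points, for a finite family of
points in any seminormed group; `tsneZ` is the case of `ℝ^s`. -/
noncomputable def studentPartition (u : ι → E) : ℝ :=
  ∑ k, ∑ l ∈ univ.erase k, studentWeight u k l

/-- The Student-t affinities of a finite family of points in any seminormed group; `tsneQ` is the
case of `ℝ^s`. -/
noncomputable def studentAffinity (u : ι → E) (k l : ι) : ℝ :=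
  studentWeight u k l / studentPartition u

/-- The t-SNE objective of a finite family of points in any seminormed group; `tsneL` is the case of
`ℝ^s`. -/
noncomputable def tsneObjective (p : ι → ι → ℝ) (u : ι → E) : ℝ :=
  ∑ k, ∑ l ∈ univ.erase k, p k l * Real.log (p k l / studentAffinity u k l)

lemma studentAffinity_comm (u : ι → E) (k l : ι) :
    studentAffinity u k l = studentAffinity u l k := by
  rw [studentAffinity, studentAffinity, studentWeight_comm]

variable [Nontrivial ι]

lemma studentPartition_pos (u : ι → E) : 0 < studentPartition u := by
  refine Finset.sum_pos (fun k _ => Finset.sum_pos (fun l _ => studentWeight_pos u k l) ?_)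
    univ_nonempty
  obtain ⟨l, hl⟩ := exists_ne k
  exact ⟨l, by simp [hl]⟩

lemma mul_log_div_studentAffinity {x : ℝ} (hx : 0 ≤ x) (u : ι → E) (k l : ι) :
    x * Real.log (x / studentAffinity u k l) =
      x * Real.log x + x * Real.log (1 + ‖u k - u l‖ ^ 2)
        + x * Real.log (studentPartition u) := by
  rcases hx.eq_or_lt with rfl | hx
  · simp
  have hw := studentWeight_pos u k l
  have hZ := studentPartition_pos u
  rw [studentAffinity, Real.log_div hx.ne' (by positivity), Real.log_div hw.ne' hZ.ne',
    studentWeight, Real.log_inv]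
  ring

lemma tsneObjective_eq {p : ι → ι → ℝ} (hp : ∀ k l, k ≠ l → 0 ≤ p k l) (u : ι → E) :
    tsneObjective p u =
      (∑ k, ∑ l ∈ univ.erase k, p k l * Real.log (p k l))
        + (∑ k, ∑ l ∈ univ.erase k, p k l * Real.log (1 + ‖u k - u l‖ ^ 2))
        + (∑ k, ∑ l ∈ univ.erase k, p k l) * Real.log (studentPartition u) := by
  simp only [tsneObjective, Finset.sum_mul, ← Finset.sum_add_distrib]
  exact Finset.sum_congr rfl fun k _ => Finset.sum_congr rfl fun l hl =>
    mul_log_div_studentAffinity (hp k l (ne_of_mem_erase hl).symm) u k l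

end StudentAffinities

section Differentiation

variable {ι E : Type*} [Fintype ι] [DecidableEq ι] [NormedAddCommGroup E] [InnerProductSpace ℝ E]

lemma hasFDerivAt_sum_mul_log_one_add (p : ι → ι → ℝ) (u : ι → E) :
    HasFDerivAt (fun v => ∑ a, ∑ b ∈ univ.erase a, p a b * Real.log (1 + ‖v a - v b‖ ^ 2))
      (pairDifferential (fun a b => p a b * studentWeight u a b) u) u := by
  refine hasFDerivAt_sum_comp_norm_sub_sq (φ := fun a b d => p a b * Real.log (1 + d))
    fun a b _ => ?_
  have hpos : 0 < 1 + ‖u a - u b‖ ^ 2 := by positivity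
  simpa [studentWeight] using
    (((hasDerivAt_id (‖u a - u b‖ ^ 2)).const_add 1).log hpos.ne').const_mul (p a b)

lemma hasFDerivAt_studentPartition (u : ι → E) :
    HasFDerivAt studentPartition (pairDifferential (fun a b => -studentWeight u a b ^ 2) u) u := by
  refine hasFDerivAt_sum_comp_norm_sub_sq (φ := fun _ _ d => (1 + d)⁻¹) fun a b _ => ?_
  have hpos : 0 < 1 + ‖u a - u b‖ ^ 2 := by positivity
  simpa [studentWeight, neg_div] using
    ((hasDerivAt_id (‖u a - u b‖ ^ 2)).const_add 1).fun_inv hpos.ne'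

lemma hasFDerivAt_tsneObjective [Nontrivial ι] {p : ι → ι → ℝ}
    (hp : ∀ k l, k ≠ l → 0 ≤ p k l) (u : ι → E) :
    HasFDerivAt (tsneObjective p)
      (pairDifferential (fun a b =>
        (p a b - (∑ i, ∑ j ∈ univ.erase i, p i j) * studentAffinity u a b)
          * studentWeight u a b) u) u := by
  have hlogZ := ((hasFDerivAt_studentPartition u).log (studentPartition_pos u).ne').const_mul
    (∑ i, ∑ j ∈ univ.erase i, p i j)
  have hsum := ((hasFDerivAt_sum_mul_log_one_add p u).const_add
    (∑ a, ∑ b ∈ univ.erase a, p a b * Real.log (p a b))).add hlogZ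
  rw [funext (tsneObjective_eq hp)]
  refine hsum.congr_fderiv ?_
  rw [smul_smul, ← pairDifferential_add_smul]
  congr 1
  ext a b
  simp only [Pi.add_apply, Pi.smul_apply, smul_eq_mul, studentAffinity]
  ring

end Differentiation

theorem tsne_gradient_general {ι E : Type*} [Fintype ι] [DecidableEq ι] [Nontrivial ι]
    [NormedAddCommGroup E] [InnerProductSpace ℝ E] [CompleteSpace E]
    (p : ι → ι → ℝ) (hp : ∀ k l, k ≠ l → 0 ≤ p k l) :
    Differentiable ℝ (tsneObjective (E := E) p) ∧
    ∀ (u : ι → E) (k : ι),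
      HasGradientAt (fun z => tsneObjective p (Function.update u k z))
        ((4 : ℝ) • ∑ l ∈ univ.erase k,
          (((p k l + p l k) / 2 - (∑ i, ∑ j ∈ univ.erase i, p i j) * studentAffinity u k l)
            * studentWeight u k l) • (u k - u l)) (u k) := by
  refine ⟨fun u => (hasFDerivAt_tsneObjective hp u).differentiableAt, fun u k => ?_⟩
  convert hasGradientAt_comp_update_of_pairDifferential (hasFDerivAt_tsneObjective hp u) k using 1
  simp only [Finset.smul_sum, smul_smul]
  refine Finset.sum_congr rfl fun l _ => ?_
  rw [studentAffinity_comm u l k, studentWeight_comm u l k]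
  congr 1
  ring

/-- The t-SNE objective is differentiable and its partial gradient with respect to the
block `u_k` is `4 Σ_{l≠k} (p_{kl} − q_{kl}(u)) (1 + d_{kl}(u))⁻¹ (u_k − u_l)`. -/
theorem tsne_gradient {N s : ℕ} (hN : 2 ≤ N) (hs : 1 ≤ s)
    (p : Fin N → Fin N → ℝ)
    (hp_pos : ∀ k l, k ≠ l → 0 < p k l)
    (hp_symm : ∀ k l, k ≠ l → p k l = p l k)
    (hp_sum : ∑ k, ∑ l ∈ univ.erase k, p k l = 1) :
    Differentiable ℝ (tsneL (s := s) p) ∧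
    ∀ (u : Fin N → EuclideanSpace ℝ (Fin s)) (k : Fin N),
      gradient (fun z => tsneL p (Function.update u k z)) (u k)
        = (4 : ℝ) • ∑ l ∈ univ.erase k,
            ((p k l - tsneQ u k l) * (1 + tsneD u k l)⁻¹) • (u k - u l) := by
  have : Nontrivial (Fin N) := Fin.nontrivial_iff_two_le.mpr hN
  obtain ⟨hdiff, hgrad⟩ := tsne_gradient_general (E := EuclideanSpace ℝ (Fin s)) p
    fun k l hkl => (hp_pos k l hkl).le
  refine ⟨hdiff, fun u k => (hgrad u k).gradient.trans ?_⟩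
  refine congrArg _ (Finset.sum_congr rfl fun l hl => ?_)
  rw [hp_sum, one_mul, ← hp_symm k l (ne_of_mem_erase hl).symm, add_self_div_two]
  rfl
end
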